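/- Let n ≥ 2 and k ≥ 0, and let e_1, …, e_{h_k} be an orthonormal basis of the space H_k of spherical harmonics of degree k with respect to the inner product (f,g) = ∫_{S^{n−1}} f(x) conj(g(x)) dω(x). Then there is a constant α_k > 0 such that for all x, y ∈ S^{n−1}: Σ_{l=1}^{h_k} e_l(x) conj(e_l(y)) = α_k · P_k^{(α,α)}(x·y), where α = (n−3)/2 and P_k^{(α,α)} is the normalized Jacobi polynomial of degree k (the addition formula). In particular the left-hand side depends only on the inner product x·y and is independent of the chosen orthonormal basis. -/

import Mathlib

open MvPolynomial MeasureTheory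
open scoped ComplexConjugate RealInnerProductSpace

/-- The Laplace operator `Δ = ∑ i ∂²/∂x_i²` on polynomials in `n` variables. -/
noncomputable def polyLaplacian (n : ℕ) :
    MvPolynomial (Fin n) ℂ →ₗ[ℂ] MvPolynomial (Fin n) ℂ :=
  ∑ i : Fin n, ((pderiv i).toLinearMap ∘ₗ (pderiv i).toLinearMap)

/-- `Harm_k`: the space of harmonic homogeneous polynomials of degree `k`. -/
noncomputable def harmSubmodule (n k : ℕ) : Submodule ℂ (MvPolynomial (Fin n) ℂ) :=
  homogeneousSubmodule (Fin n) ℂ k ⊓ LinearMap.ker (polyLaplacian n)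

/-- Restriction of polynomials to functions on the unit sphere `S^{n-1}`. -/
noncomputable def restrictSphere (n : ℕ) :
    MvPolynomial (Fin n) ℂ →ₗ[ℂ]
      ((Metric.sphere (0 : EuclideanSpace ℝ (Fin n)) 1) → ℂ) :=
  LinearMap.pi fun p =>
    (aeval fun i : Fin n => (((p : EuclideanSpace ℝ (Fin n)) i : ℝ) : ℂ)).toLinearMap

/-- `H_k ⊆ C(S^{n-1})`: the spherical harmonics of degree `k`. -/
noncomputable def sphereHarm (n k : ℕ) :
    Submodule ℂ ((Metric.sphere (0 : EuclideanSpace ℝ (Fin n)) 1) → ℂ) :=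
  (harmSubmodule n k).map (restrictSphere n)

lemma intervalIntegrable_one_sub_sq_rpow {n : ℕ} (hn : 2 ≤ n) :
    IntervalIntegrable (fun t : ℝ => (1 - t ^ 2) ^ ((n - 3 : ℝ) / 2)) volume (-1) 1 := by
  rcases hn.eq_or_lt with rfl | hn
  · have h := intervalIntegral.intervalIntegrable_deriv_of_nonneg (g := Real.arcsin)
      (g' := fun t => 1 / √(1 - t ^ 2)) (a := -1) (b := 1) Real.continuous_arcsin.continuousOn
      (fun x hx => by
        norm_num at hx
        exact Real.hasDerivAt_arcsin (by linarith) (by linarith))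
      (fun x _ => by positivity)
    refine h.congr_uIoo fun t ht => ?_
    norm_num at ht
    have : 0 ≤ 1 - t ^ 2 := by nlinarith
    simp only
    rw [Real.sqrt_eq_rpow, one_div, ← Real.rpow_neg this]
    norm_num
  · have : (3 : ℝ) ≤ n := by exact_mod_cast hn
    apply Continuous.intervalIntegrable
    exact Continuous.rpow_const (by fun_prop) fun _ => Or.inr (by linarith)

/-- Integration by parts for the Gegenbauer operator. -/
lemma integral_gegenbauer {n : ℕ} (hn : 2 ≤ n) (P Q : Polynomial ℝ) :
    ∫ t in (-1 : ℝ)..1, ((1 - t ^ 2) * (P.derivative.derivative.eval t * Q.eval t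
        - P.eval t * Q.derivative.derivative.eval t)
      - (n - 1) * t * (P.derivative.eval t * Q.eval t - P.eval t * Q.derivative.eval t))
        * (1 - t ^ 2) ^ ((n - 3 : ℝ) / 2) = 0 := by
  have h2 : (2 : ℝ) ≤ n := by exact_mod_cast hn
  have hβ : (0 : ℝ) < (n - 1) / 2 := by linarith
  rw [intervalIntegral.integral_eq_sub_of_hasDerivAt_of_le (by norm_num)
    (f := fun t => (1 - t ^ 2) ^ ((n - 1 : ℝ) / 2)
      * (P.derivative.eval t * Q.eval t - P.eval t * Q.derivative.eval t))]
  · norm_num [Real.zero_rpow hβ.ne']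
  · apply Continuous.continuousOn
    exact (Continuous.rpow_const (by fun_prop) fun _ => Or.inr hβ.le).mul (by fun_prop)
  · intro t ht
    have hw : 0 < 1 - t ^ 2 := by nlinarith [ht.1, ht.2]
    have h1 : HasDerivAt (fun t : ℝ => 1 - t ^ 2) (-(2 * t)) t := by
      simpa using (hasDerivAt_pow 2 t).const_sub 1
    have h2 := (h1.rpow_const (p := (n - 1 : ℝ) / 2) (Or.inl hw.ne')).mul
      (((P.derivative.hasDerivAt t).mul (Q.hasDerivAt t)).sub
        ((P.hasDerivAt t).mul (Q.derivative.hasDerivAt t)))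
    refine h2.congr_deriv ?_
    have e1 : (n - 1 : ℝ) / 2 - 1 = (n - 3) / 2 := by ring
    have e2 : (1 - t ^ 2) ^ ((n - 1 : ℝ) / 2) = (1 - t ^ 2) ^ ((n - 3 : ℝ) / 2) * (1 - t ^ 2) := by
      rw [← e1, Real.rpow_sub_one hw.ne']
      field_simp
    simp only [e1, e2, Pi.mul_apply, Pi.sub_apply]
    ring
  · apply (intervalIntegrable_one_sub_sq_rpow hn).continuousOn_mul
    fun_prop

/-- The Gegenbauer equation of degree `k` (in dimension `n`). -/
def IsGegenbauer (n k : ℕ) (P : Polynomial ℝ) : Prop :=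
  ∀ t ∈ Set.Icc (-1 : ℝ) 1, (1 - t ^ 2) * P.derivative.derivative.eval t
    - (n - 1) * t * P.derivative.eval t + k * (k + n - 2) * P.eval t = 0

lemma eigenvalue_ne {n k j : ℕ} (hn : 2 ≤ n) (hjk : j < k) :
    (k * (k + n - 2) : ℝ) ≠ j * (j + n - 2) := by
  have h2 : (2 : ℝ) ≤ n := by exact_mod_cast hn
  have h3 : (j : ℝ) < k := by exact_mod_cast hjk
  have h4 : (0 : ℝ) ≤ j := j.cast_nonneg
  nlinarith

lemma IsGegenbauer.integral_X_pow {n k : ℕ} (hn : 2 ≤ n) {P : Polynomial ℝ}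
    (hP : IsGegenbauer n k P) (j : ℕ) (hj : j < k) :
    ∫ t in (-1 : ℝ)..1, P.eval t * t ^ j * (1 - t ^ 2) ^ ((n - 3 : ℝ) / 2) = 0 := by
  induction j using Nat.strong_induction_on with
  | _ j ih =>
    have hint (Q : Polynomial ℝ) : IntervalIntegrable
        (fun t => P.eval t * Q.eval t * (1 - t ^ 2) ^ ((n - 3 : ℝ) / 2)) volume (-1) 1 :=
      (intervalIntegrable_one_sub_sq_rpow hn).continuousOn_mul (by fun_prop)
    have h0 : (j * (j - 1) : ℝ) *
        ∫ t in (-1 : ℝ)..1, P.eval t * t ^ (j - 2) * (1 - t ^ 2) ^ ((n - 3 : ℝ) / 2) = 0 := by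
      rcases lt_or_ge j 2 with h | h
      · interval_cases j <;> simp
      · rw [ih (j - 2) (by omega) (by omega), mul_zero]
    have key := integral_gegenbauer hn P (.X ^ j)
    have e : ∀ t ∈ Set.uIcc (-1 : ℝ) 1,
        ((1 - t ^ 2) * (P.derivative.derivative.eval t * (Polynomial.X ^ j).eval t
        - P.eval t * (Polynomial.X ^ j).derivative.derivative.eval t)
      - (n - 1) * t * (P.derivative.eval t * (Polynomial.X ^ j).eval t
        - P.eval t * (Polynomial.X ^ j).derivative.eval t))
        * (1 - t ^ 2) ^ ((n - 3 : ℝ) / 2)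
      = (j * (j + n - 2) - k * (k + n - 2)) *
          (P.eval t * t ^ j * (1 - t ^ 2) ^ ((n - 3 : ℝ) / 2))
        - (j * (j - 1) : ℝ) *
          (P.eval t * t ^ (j - 2) * (1 - t ^ 2) ^ ((n - 3 : ℝ) / 2)) := by
      intro t ht
      rw [Set.uIcc_of_le (by norm_num)] at ht
      have := hP t ht
      generalize (1 - t ^ 2) ^ ((n - 3 : ℝ) / 2) = w
      rcases j with _ | _ | j
      · simp
        linear_combination w * this
      · simp
        linear_combination t * w * this
      · simp
        linear_combination t ^ (j + 2) * w * this
    rw [intervalIntegral.integral_congr e, intervalIntegral.integral_sub,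
      intervalIntegral.integral_const_mul, intervalIntegral.integral_const_mul, h0, sub_zero] at key
    · exact (mul_eq_zero.mp key).resolve_left (sub_ne_zero.mpr (eigenvalue_ne hn hj).symm)
    · simpa using (hint (.X ^ j)).const_mul (j * (j + n - 2) - k * (k + n - 2) : ℝ)
    · simpa using (hint (.X ^ (j - 2))).const_mul (j * (j - 1) : ℝ)

lemma IsGegenbauer.integral_eq_zero {n k : ℕ} (hn : 2 ≤ n) {P : Polynomial ℝ}
    (hP : IsGegenbauer n k P) (Q : Polynomial ℝ) (hQ : Q.degree < k) :
    ∫ t in (-1 : ℝ)..1, P.eval t * Q.eval t * (1 - t ^ 2) ^ ((n - 3 : ℝ) / 2) = 0 := by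
  have hQ' (t : ℝ) : P.eval t * Q.eval t * (1 - t ^ 2) ^ ((n - 3 : ℝ) / 2)
      = ∑ j ∈ Q.support, Q.coeff j * (P.eval t * t ^ j * (1 - t ^ 2) ^ ((n - 3 : ℝ) / 2)) := by
    rw [Polynomial.eval_eq_sum (p := Q), Polynomial.sum, Finset.mul_sum, Finset.sum_mul]
    exact Finset.sum_congr rfl fun _ _ => by ring
  simp_rw [hQ']
  rw [intervalIntegral.integral_finsetSum]
  · refine Finset.sum_eq_zero fun j hj => ?_
    rw [intervalIntegral.integral_const_mul, hP.integral_X_pow hn j, mul_zero]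
    exact_mod_cast (Polynomial.le_degree_of_mem_supp j hj).trans_lt hQ
  · intro j _
    apply IntervalIntegrable.const_mul
    exact (intervalIntegrable_one_sub_sq_rpow hn).continuousOn_mul (by fun_prop)

lemma IsGegenbauer.degree_eq {n k : ℕ} (hn : 2 ≤ n) {P : Polynomial ℝ}
    (hP : IsGegenbauer n k P) (h0 : P ≠ 0) : P.degree = k := by
  have h : (1 - .X ^ 2) * P.derivative.derivative - .C (n - 1 : ℝ) * (.X * P.derivative)
      + .C (k * (k + n - 2) : ℝ) * P = 0 := by
    refine Polynomial.eq_zero_of_infinite_isRoot _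
      ((Set.Icc_infinite (show (-1 : ℝ) < 1 by norm_num)).mono fun t ht => ?_)
    have := hP t ht
    simp only [Set.mem_ofPred_eq, Polynomial.IsRoot, Polynomial.eval_add, Polynomial.eval_sub,
      Polynomial.eval_mul, Polynomial.eval_one, Polynomial.eval_pow, Polynomial.eval_X,
      Polynomial.eval_C]
    linarith
  rw [Polynomial.degree_eq_natDegree h0]
  norm_cast
  have hc := congr_arg (Polynomial.coeff · P.natDegree) h
  set d := P.natDegree with hd
  have hlead : P.coeff d ≠ 0 := by simpa [hd] using h0
  have e0 : P.coeff (d + 2) = 0 := Polynomial.coeff_eq_zero_of_natDegree_lt (by omega)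
  have hc' : (k * (k + n - 2) - d * (d + n - 2) : ℝ) * P.coeff d = 0 := by
    refine Eq.trans ?_ hc
    generalize (k * (k + n - 2) : ℝ) = c
    rcases d with _ | _ | d
    · simp [sub_mul, Polynomial.coeff_derivative, e0, pow_two, mul_assoc]
    · simp [sub_mul, Polynomial.coeff_derivative, e0, pow_two, mul_assoc]
      ring
    · simp [sub_mul, Polynomial.coeff_derivative, e0, pow_two, mul_assoc]
      ring
  have hz := (mul_eq_zero.mp hc').resolve_right hlead
  rcases lt_trichotomy d k with h | h | h
  · exact absurd (sub_eq_zero.mp hz) (eigenvalue_ne hn h)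
  · exact h
  · exact absurd (sub_eq_zero.mp hz).symm (eigenvalue_ne hn h)

lemma polyLaplacian_apply (n : ℕ) (F : MvPolynomial (Fin n) ℂ) :
    polyLaplacian n F = ∑ i, pderiv i (pderiv i F) := by
  simp [polyLaplacian, LinearMap.sum_apply]

lemma mem_harmSubmodule {n k : ℕ} {F : MvPolynomial (Fin n) ℂ} :
    F ∈ harmSubmodule n k ↔ F.IsHomogeneous k ∧ polyLaplacian n F = 0 := by
  simp [harmSubmodule, mem_homogeneousSubmodule]

/-- Evaluation of a complex polynomial at a real vector. -/
noncomputable def realEval {n : ℕ} (v : Fin n → ℝ) : MvPolynomial (Fin n) ℂ →ₐ[ℂ] ℂ :=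
  aeval fun i => (v i : ℂ)

lemma realEval_X {n : ℕ} (v : Fin n → ℝ) (i : Fin n) : realEval v (X i) = v i := by
  simp [realEval]

lemma restrictSphere_apply {n : ℕ} (F : MvPolynomial (Fin n) ℂ)
    (x : Metric.sphere (0 : EuclideanSpace ℝ (Fin n)) 1) :
    restrictSphere n F x = realEval (x : EuclideanSpace ℝ (Fin n)) F := rfl

lemma continuous_realEval {n : ℕ} (F : MvPolynomial (Fin n) ℂ) :
    Continuous fun v : EuclideanSpace ℝ (Fin n) => realEval v F := by
  induction F using MvPolynomial.induction_on with
  | C a => simpa [realEval] using continuous_const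
  | add p q hp hq =>
    simp only [map_add]
    exact hp.add hq
  | mul_X p i hp =>
    simp only [map_mul, realEval_X]
    exact hp.mul (by fun_prop)

lemma realEval_smul {n k : ℕ} {F : MvPolynomial (Fin n) ℂ} (hF : F.IsHomogeneous k)
    (c : ℝ) (v : Fin n → ℝ) : realEval (c • v) F = c ^ k * realEval v F := by
  simp only [realEval, aeval_eq_eval₂Hom, coe_eval₂Hom, eval₂_eq', Finset.mul_sum]
  refine Finset.sum_congr rfl fun d hd => ?_
  have hdeg : ∑ i, d i = k := by
    rw [← hF (mem_support_iff.mp hd), Finsupp.weight_apply, Finsupp.sum_fintype _ _ (by simp)]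
    simp
  simp only [Pi.smul_apply, smul_eq_mul, Complex.ofReal_mul, mul_pow, Finset.prod_mul_distrib,
    Finset.prod_pow_eq_pow_sum, hdeg]
  ring

lemma eq_of_realEval_eq {n : ℕ} {F G : MvPolynomial (Fin n) ℂ}
    (h : ∀ v, realEval v F = realEval v G) : F = G := by
  refine MvPolynomial.funext_set (fun _ => Set.range ((↑) : ℝ → ℂ))
    (fun _ => Set.infinite_range_of_injective Complex.ofReal_injective) fun x hx => ?_
  choose v hv using fun i => hx i (Set.mem_univ i)
  obtain rfl : (fun i => (v i : ℂ)) = x := funext hv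
  exact h v

/-- Linear change of variables in a polynomial. -/
noncomputable def linearSubst {n : ℕ} (A : Matrix (Fin n) (Fin n) ℝ) :
    MvPolynomial (Fin n) ℂ →ₐ[ℂ] MvPolynomial (Fin n) ℂ :=
  aeval fun i => ∑ j, C (A i j : ℂ) * X j

lemma realEval_linearSubst {n : ℕ} (A : Matrix (Fin n) (Fin n) ℝ) (v : Fin n → ℝ)
    (F : MvPolynomial (Fin n) ℂ) : realEval v (linearSubst A F) = realEval (A.mulVec v) F := by
  suffices (realEval v).comp (linearSubst A) = realEval (A.mulVec v) from DFunLike.congr_fun this F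
  ext i
  simp [linearSubst, realEval, Matrix.mulVec, dotProduct]

lemma pderiv_linearSubst {n : ℕ} (A : Matrix (Fin n) (Fin n) ℝ) (j : Fin n)
    (F : MvPolynomial (Fin n) ℂ) :
    pderiv j (linearSubst A F) = ∑ i, C (A i j : ℂ) * linearSubst A (pderiv i F) := by
  induction F using MvPolynomial.induction_on with
  | C a => simp [linearSubst]
  | add p q hp hq => simp [hp, hq, mul_add, Finset.sum_add_distrib]
  | mul_X p i hp =>
    have hX : pderiv j (linearSubst A (X i)) = C (A i j : ℂ) := by
      simp [linearSubst, pderiv_X, Pi.single_apply]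
    simp only [map_mul, Derivation.leibniz, hp, hX, pderiv_X, smul_eq_mul, map_add, mul_add,
      Finset.sum_add_distrib, Finset.mul_sum]
    congr 1
    · rw [Finset.sum_eq_single i]
      · simp [mul_comm]
      · intro b _ hb
        simp [hb]
      · simp
    · exact Finset.sum_congr rfl fun _ _ => by ring

lemma polyLaplacian_linearSubst {n : ℕ} {A : Matrix (Fin n) (Fin n) ℝ}
    (hA : A * A.transpose = 1) (F : MvPolynomial (Fin n) ℂ) :
    polyLaplacian n (linearSubst A F) = linearSubst A (polyLaplacian n F) := by
  have hA' (i l : Fin n) :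
      ∑ j, (C (A i j : ℂ) * C (A l j : ℂ) : MvPolynomial (Fin n) ℂ) = if i = l then 1 else 0 := by
    have := congr_fun₂ hA i l
    simp only [Matrix.mul_apply, Matrix.transpose_apply, Matrix.one_apply] at this
    have h2 := congr_arg (fun r : ℝ => (C (r : ℂ) : MvPolynomial (Fin n) ℂ)) this
    simp only [Complex.ofReal_sum, map_sum, Complex.ofReal_mul, map_mul] at h2
    rw [h2]
    split_ifs <;> simp
  simp only [polyLaplacian_apply, pderiv_linearSubst, map_sum, Derivation.leibniz, pderiv_C,
    smul_eq_mul, mul_zero, add_zero, Finset.mul_sum]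
  rw [Finset.sum_comm]
  refine Finset.sum_congr rfl fun i _ => ?_
  rw [Finset.sum_comm]
  simp_rw [← mul_assoc, ← Finset.sum_mul, hA']
  simp

lemma linearSubst_mem_harmSubmodule {n k : ℕ} {A : Matrix (Fin n) (Fin n) ℝ}
    (hA : A * A.transpose = 1) {F : MvPolynomial (Fin n) ℂ} (hF : F ∈ harmSubmodule n k) :
    linearSubst A F ∈ harmSubmodule n k := by
  rw [mem_harmSubmodule] at hF ⊢
  refine ⟨?_, by rw [polyLaplacian_linearSubst hA, hF.2, map_zero]⟩
  rw [← one_mul k]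
  refine hF.1.aeval _ fun i => IsHomogeneous.sum _ _ _ fun j _ => ?_
  simpa using (isHomogeneous_C (Fin n) (A i j : ℂ)).mul (isHomogeneous_X ℂ j)

/-- The isometry of the unit sphere induced by a linear isometry. -/
def sphereIsometry {E : Type*} [NormedAddCommGroup E] [NormedSpace ℝ E] (g : E ≃ₗᵢ[ℝ] E) :
    Metric.sphere (0 : E) 1 ≃ᵢ Metric.sphere (0 : E) 1 where
  toFun x := ⟨g x, by simp⟩
  invFun x := ⟨g.symm x, by simp⟩
  left_inv x := by simp
  right_inv x := by simp
  isometry_toFun x y := g.isometry x y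

lemma comp_sphereIsometry_mem {n k : ℕ}
    (g : EuclideanSpace ℝ (Fin n) ≃ₗᵢ[ℝ] EuclideanSpace ℝ (Fin n))
    {f : Metric.sphere (0 : EuclideanSpace ℝ (Fin n)) 1 → ℂ} (hf : f ∈ sphereHarm n k) :
    f ∘ sphereIsometry g ∈ sphereHarm n k := by
  obtain ⟨F, hF, rfl⟩ := hf
  let b := EuclideanSpace.basisFun (Fin n) ℝ
  let A : Matrix (Fin n) (Fin n) ℝ := LinearMap.toMatrix b.toBasis b.toBasis g.toLinearEquiv
  have hA : A * A.transpose = 1 := by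
    simpa [Matrix.star_eq_conjTranspose] using
      Matrix.mem_unitaryGroup_iff.mp (g.toMatrix_mem_unitaryGroup b b)
  refine ⟨linearSubst A F, linearSubst_mem_harmSubmodule hA hF, ?_⟩
  ext x
  rw [Function.comp_apply, restrictSphere_apply, restrictSphere_apply, realEval_linearSubst]
  congr 2
  have := LinearMap.toMatrix_mulVec_repr b.toBasis b.toBasis g.toLinearEquiv.toLinearMap x
  exact this

/-- The sum of the squares of the variables other than the `i₀`-th one. -/
noncomputable def transverseSq {n : ℕ} (i₀ : Fin n) : MvPolynomial (Fin n) ℂ :=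
  ∑ i ∈ Finset.univ.erase i₀, X i ^ 2

lemma realEval_transverseSq {n : ℕ} (i₀ : Fin n) (v : Fin n → ℝ) :
    realEval v (transverseSq i₀) = ((∑ i, v i ^ 2 - v i₀ ^ 2 : ℝ) : ℂ) := by
  rw [← Finset.sum_erase_eq_sub (Finset.mem_univ i₀)]
  simp [transverseSq, realEval_X]

lemma pderiv_transverseSq {n : ℕ} (i₀ i : Fin n) :
    pderiv i (transverseSq i₀) = if i = i₀ then 0 else 2 * X i := by
  simp only [transverseSq, map_sum, Derivation.leibniz_pow, pderiv_X, smul_eq_mul, Pi.single_apply]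
  split_ifs with h
  · refine Finset.sum_eq_zero fun j hj => ?_
    have : j ≠ i := by rintro rfl; exact (Finset.mem_erase.mp hj).1 h
    simp [this]
  · simp [h]

/-- The polynomial function giving the Laplacian of the restriction to the unit sphere of
`X₀ ^ a * (transverseSq) ^ j` in terms of the coordinate `t` along the axis. -/
def zonalLaplacian (n a j : ℕ) (t : ℝ) : ℝ :=
  a * (a - 1) * t ^ (a - 2) * (1 - t ^ 2) ^ j
    + (2 * j * (2 * j - 2) + 2 * j * (n - 1)) * t ^ a * (1 - t ^ 2) ^ (j - 1)

lemma pderiv_pderiv_zonal_axis {n : ℕ} (i₀ : Fin n) (a j : ℕ) :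
    pderiv i₀ (pderiv i₀ (X i₀ ^ a * transverseSq i₀ ^ j)) =
      ((a * (a - 1) : ℕ) : MvPolynomial (Fin n) ℂ) * X i₀ ^ (a - 2) * transverseSq i₀ ^ j := by
  simp only [Derivation.leibniz, Derivation.leibniz_pow, pderiv_transverseSq, if_true, mul_zero,
    pderiv_X_self, zero_add, mul_one, smul_eq_mul, nsmul_eq_mul,
    Derivation.map_natCast, Nat.sub_sub]
  push_cast
  ring

lemma pderiv_pderiv_zonal_transverse {n : ℕ} {i₀ i : Fin n} (hi : i ≠ i₀) (a j : ℕ) :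
    pderiv i (pderiv i (X i₀ ^ a * transverseSq i₀ ^ j)) =
      ((4 * j * (j - 1) : ℕ) : MvPolynomial (Fin n) ℂ) * X i₀ ^ a
          * transverseSq i₀ ^ (j - 2) * X i ^ 2
        + ((2 * j : ℕ) : MvPolynomial (Fin n) ℂ) * X i₀ ^ a * transverseSq i₀ ^ (j - 1) := by
  have h2 : pderiv i (2 : MvPolynomial (Fin n) ℂ) = 0 := by
    simpa using (pderiv (R := ℂ) i).map_natCast 2
  simp only [Derivation.leibniz, Derivation.leibniz_pow, pderiv_transverseSq, if_neg hi, smul_zero,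
    pderiv_X_self, smul_eq_mul, nsmul_eq_mul, Derivation.map_natCast, Nat.sub_sub,
    pderiv_X_of_ne hi.symm, add_zero, mul_zero, h2, mul_one]
  push_cast
  ring

lemma realEval_polyLaplacian_zonal {n : ℕ} (i₀ : Fin n) (a j : ℕ) {v : Fin n → ℝ}
    (hv : ∑ i, v i ^ 2 = 1) :
    realEval v (polyLaplacian n (X i₀ ^ a * transverseSq i₀ ^ j)) =
      zonalLaplacian n a j (v i₀) := by
  have hn : ((Finset.univ.erase i₀).card : ℂ) = n - 1 := by
    rw [Finset.card_erase_of_mem (Finset.mem_univ _), Finset.card_univ, Fintype.card_fin,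
      Nat.cast_sub i₀.pos]
    simp
  have hS := realEval_transverseSq i₀ v
  rw [hv] at hS
  rw [polyLaplacian_apply, ← Finset.add_sum_erase _ _ (Finset.mem_univ i₀),
    pderiv_pderiv_zonal_axis, Finset.sum_congr rfl fun i hi =>
      pderiv_pderiv_zonal_transverse (Finset.ne_of_mem_erase hi) a j,
    Finset.sum_add_distrib, ← Finset.mul_sum, ← transverseSq, Finset.sum_const, nsmul_eq_mul]
  simp only [map_add, map_mul, map_pow, map_natCast, hS, realEval_X, hn, zonalLaplacian]
  push_cast
  rcases a with _ | _ | a <;> rcases j with _ | _ | j <;> push_cast <;> simp <;> ring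

lemma gegenbauer_zonal (n a j : ℕ) (t : ℝ) :
    (1 - t ^ 2) * ((.X ^ a * (1 - .X ^ 2) ^ j : Polynomial ℝ).derivative.derivative.eval t)
      - (n - 1) * t * ((.X ^ a * (1 - .X ^ 2) ^ j : Polynomial ℝ).derivative.eval t)
      + (a + 2 * j) * (a + 2 * j + n - 2) * (.X ^ a * (1 - .X ^ 2) ^ j : Polynomial ℝ).eval t
      = zonalLaplacian n a j t := by
  rcases a with _ | _ | a <;> rcases j with _ | _ | j <;>
    simp [zonalLaplacian, Polynomial.derivative_pow] <;> ring

/-- The vector `t e_{i₀} + b e_{i₁}`. -/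
def planeVec {n : ℕ} (i₀ i₁ : Fin n) (t b : ℝ) : Fin n → ℝ :=
  Pi.single i₀ t + Pi.single i₁ b

lemma planeVec_left {n : ℕ} {i₀ i₁ : Fin n} (hi : i₀ ≠ i₁) (t b : ℝ) :
    planeVec i₀ i₁ t b i₀ = t := by simp [planeVec, hi]

lemma planeVec_right {n : ℕ} {i₀ i₁ : Fin n} (hi : i₀ ≠ i₁) (t b : ℝ) :
    planeVec i₀ i₁ t b i₁ = b := by simp [planeVec, hi.symm]

lemma planeVec_of_ne {n : ℕ} {i₀ i₁ i : Fin n} (h0 : i ≠ i₀) (h1 : i ≠ i₁) (t b : ℝ) :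
    planeVec i₀ i₁ t b i = 0 := by simp [planeVec, h0, h1]

lemma prod_eq_mul_mul_prod_erase_erase {n : ℕ} {M : Type*} [CommMonoid M]
    {i₀ i₁ : Fin n} (hi : i₀ ≠ i₁) (f : Fin n → M) :
    ∏ i, f i = f i₀ * f i₁ * ∏ i ∈ (Finset.univ.erase i₀).erase i₁, f i := by
  rw [mul_assoc, Finset.mul_prod_erase _ _ (by simp [hi.symm]), Finset.mul_prod_erase _ _ (by simp)]

lemma sum_eq_add_add_sum_erase_erase {n : ℕ} {M : Type*} [AddCommMonoid M]
    {i₀ i₁ : Fin n} (hi : i₀ ≠ i₁) (f : Fin n → M) :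
    ∑ i, f i = f i₀ + f i₁ + ∑ i ∈ (Finset.univ.erase i₀).erase i₁, f i := by
  rw [add_assoc, Finset.add_sum_erase _ _ (by simp [hi.symm]), Finset.add_sum_erase _ _ (by simp)]

lemma sum_sq_planeVec {n : ℕ} {i₀ i₁ : Fin n} (hi : i₀ ≠ i₁) (t b : ℝ) :
    ∑ i, planeVec i₀ i₁ t b i ^ 2 = t ^ 2 + b ^ 2 := by
  rw [sum_eq_add_add_sum_erase_erase hi, planeVec_left hi, planeVec_right hi,
    Finset.sum_eq_zero, add_zero]
  intro i h
  simp only [Finset.mem_erase] at h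
  simp [planeVec_of_ne h.2.1 h.1]

lemma exists_realEval_planeVec {n k : ℕ} {i₀ i₁ : Fin n} (hi : i₀ ≠ i₁)
    {F : MvPolynomial (Fin n) ℂ} (hF : F.IsHomogeneous k) :
    ∃ c : ℕ → ℂ, ∀ t b : ℝ, realEval (planeVec i₀ i₁ t b) F =
      ∑ i ∈ Finset.range (k + 1), c i * (t : ℂ) ^ (k - i) * (b : ℂ) ^ i := by
  have hmono : ∀ d ∈ F.support, ∃ c : ℕ → ℂ, ∀ t b : ℝ,
      F.coeff d * ∏ i, (planeVec i₀ i₁ t b i : ℂ) ^ d i =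
        ∑ i ∈ Finset.range (k + 1), c i * (t : ℂ) ^ (k - i) * (b : ℂ) ^ i := by
    intro d hd
    have hdeg : ∑ i, d i = k := by
      rw [← hF (mem_support_iff.mp hd), Finsupp.weight_apply, Finsupp.sum_fintype _ _ (by simp)]
      simp
    rw [sum_eq_add_add_sum_erase_erase hi] at hdeg
    by_cases h : ∀ i ∈ (Finset.univ.erase i₀).erase i₁, d i = 0
    · rw [Finset.sum_eq_zero h, add_zero] at hdeg
      refine ⟨fun i => if i = d i₁ then F.coeff d else 0, fun t b => ?_⟩
      rw [prod_eq_mul_mul_prod_erase_erase hi,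
        Finset.prod_eq_one fun i hi => by rw [h i hi, pow_zero],
        planeVec_left hi, planeVec_right hi, Finset.sum_eq_single (d i₁)]
      · simp only [if_true, ← hdeg, Nat.add_sub_cancel]
        ring
      · intro i _ hi
        simp [hi]
      · intro hn
        exact absurd (Finset.mem_range.mpr (by omega)) hn
    · push Not at h
      obtain ⟨i, him, hid⟩ := h
      refine ⟨0, fun t b => ?_⟩
      simp only [Finset.mem_erase] at him
      rw [Finset.prod_eq_zero (Finset.mem_univ i)]
      · simp
      · simp [planeVec_of_ne him.2.1 him.1, hid]
  choose! c hc using hmono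
  refine ⟨fun i => ∑ d ∈ F.support, c d i, fun t b => ?_⟩
  rw [realEval, aeval_eq_eval₂Hom, coe_eval₂Hom, eval₂_eq']
  simp only [Finset.sum_mul]
  rw [Finset.sum_comm]
  exact Finset.sum_congr rfl fun d hd => hc d hd t b

/-- `F` is zonal with axis `i₀` if on the unit sphere it depends only on that coordinate. -/
def IsZonal {n : ℕ} (i₀ : Fin n) (F : MvPolynomial (Fin n) ℂ) : Prop :=
  ∀ x y : Fin n → ℝ, ∑ i, x i ^ 2 = 1 → ∑ i, y i ^ 2 = 1 → x i₀ = y i₀ →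
    realEval x F = realEval y F

lemma IsZonal.realEval_eq {n k : ℕ} {i₀ : Fin n} {F : MvPolynomial (Fin n) ℂ} (hz : IsZonal i₀ F)
    (hF : F.IsHomogeneous k) {x y : Fin n → ℝ} (h : ∑ i, x i ^ 2 = ∑ i, y i ^ 2)
    (h₀ : x i₀ = y i₀) : realEval x F = realEval y F := by
  have hnn : 0 ≤ ∑ i, x i ^ 2 := Finset.sum_nonneg fun i _ => sq_nonneg _
  have zero_of (z : Fin n → ℝ) (hz : ∑ i, z i ^ 2 = 0) : z = 0 := by
    ext i
    simpa using (Finset.sum_eq_zero_iff_of_nonneg fun i _ => sq_nonneg (z i)).mp hz i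
      (Finset.mem_univ i)
  rcases hnn.eq_or_lt with h0 | h0
  · rw [zero_of x h0.symm, zero_of y (h ▸ h0.symm)]
  · set r := √(∑ i, x i ^ 2) with hr
    have hr0 : r ≠ 0 := (Real.sqrt_pos.mpr h0).ne'
    have hr2 : r ^ 2 = ∑ i, x i ^ 2 := Real.sq_sqrt h0.le
    have hx : x = r • r⁻¹ • x := by rw [smul_inv_smul₀ hr0]
    have hy : y = r • r⁻¹ • y := by rw [smul_inv_smul₀ hr0]
    rw [hx, hy, realEval_smul hF _ (r⁻¹ • x), realEval_smul hF _ (r⁻¹ • y), hz (r⁻¹ • x) (r⁻¹ • y)]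
    · simp only [Pi.smul_apply, smul_eq_mul, mul_pow, ← Finset.mul_sum, ← hr2]
      field_simp
    · simp only [Pi.smul_apply, smul_eq_mul, mul_pow, ← Finset.mul_sum, ← h, ← hr2]
      field_simp
    · simp [h₀]

lemma IsZonal.exists_eq_sum {n k : ℕ} {i₀ i₁ : Fin n} (hi : i₀ ≠ i₁)
    {F : MvPolynomial (Fin n) ℂ} (hz : IsZonal i₀ F) (hF : F.IsHomogeneous k) :
    ∃ c : ℕ → ℂ, F = ∑ i ∈ Finset.range (k + 1) with Even i,
      C (c i) * (X i₀ ^ (k - i) * transverseSq i₀ ^ (i / 2)) := by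
  obtain ⟨c, hc⟩ := exists_realEval_planeVec hi hF
  refine ⟨c, eq_of_realEval_eq fun x => ?_⟩
  have hnn : 0 ≤ ∑ i, x i ^ 2 - x i₀ ^ 2 := by
    rw [← Finset.sum_erase_eq_sub (Finset.mem_univ i₀)]
    exact Finset.sum_nonneg fun i _ => sq_nonneg _
  set r := √(∑ i, x i ^ 2 - x i₀ ^ 2) with hr
  have hr2 : r ^ 2 = ∑ i, x i ^ 2 - x i₀ ^ 2 := Real.sq_sqrt hnn
  have h1 : realEval x F = realEval (planeVec i₀ i₁ (x i₀) r) F :=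
    hz.realEval_eq hF (by rw [sum_sq_planeVec hi, hr2]; ring) (planeVec_left hi _ _).symm
  have h2 : realEval x F = realEval (planeVec i₀ i₁ (x i₀) (-r)) F :=
    hz.realEval_eq hF (by rw [sum_sq_planeVec hi, neg_sq, hr2]; ring) (planeVec_left hi _ _).symm
  have h3 : realEval x F = (realEval (planeVec i₀ i₁ (x i₀) r) F
      + realEval (planeVec i₀ i₁ (x i₀) (-r)) F) / 2 := by
    rw [← h1, ← h2]; ring
  rw [h3, hc, hc, ← Finset.sum_add_distrib, Finset.sum_div, map_sum, Finset.sum_filter]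
  refine Finset.sum_congr rfl fun i _ => ?_
  have hC : realEval x (C (c i)) = c i := by simp [realEval]
  split_ifs with he
  · obtain ⟨m, rfl⟩ := he
    have hm : (m + m) / 2 = m := by omega
    rw [map_mul, map_mul, map_pow, map_pow, realEval_transverseSq, realEval_X, hC, ← hr2, hm]
    push_cast
    rw [Even.neg_pow ⟨m, rfl⟩]
    ring
  · push_cast
    rw [(Nat.not_even_iff_odd.mp he).neg_pow]
    ring

lemma IsZonal.exists_isGegenbauer {n k : ℕ} {i₀ i₁ : Fin n} (hi : i₀ ≠ i₁)
    {F : MvPolynomial (Fin n) ℂ} (hz : IsZonal i₀ F) (hF : F ∈ harmSubmodule n k) :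
    ∃ P : Polynomial ℝ, IsGegenbauer n k P ∧
      ∀ x : Fin n → ℝ, ∑ i, x i ^ 2 = 1 → P.eval (x i₀) = (realEval x F).re := by
  rw [mem_harmSubmodule] at hF
  obtain ⟨c, hc⟩ := hz.exists_eq_sum hi hF.1
  refine ⟨∑ i ∈ Finset.range (k + 1) with Even i,
    .C (c i).re * (.X ^ (k - i) * (1 - .X ^ 2) ^ (i / 2)), fun t ht => ?_, fun x hx => ?_⟩
  · have hw : 0 ≤ 1 - t ^ 2 := by nlinarith [ht.1, ht.2]
    have hv : ∑ i, planeVec i₀ i₁ t (√(1 - t ^ 2)) i ^ 2 = 1 := by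
      rw [sum_sq_planeVec hi, Real.sq_sqrt hw]; ring
    have h0 := congr_arg (realEval (planeVec i₀ i₁ t (√(1 - t ^ 2)))) hF.2
    rw [hc] at h0
    simp only [← smul_eq_C_mul, map_sum, map_smul, realEval_polyLaplacian_zonal i₀ _ _ hv, map_zero,
      planeVec_left hi] at h0
    have h1 := congr_arg Complex.re h0
    simp only [Complex.re_sum, smul_eq_mul, Complex.re_mul_ofReal, Complex.zero_re] at h1
    rw [← h1]
    simp only [Polynomial.derivative_sum, Polynomial.derivative_C_mul, Polynomial.eval_finsetSum,
      Polynomial.eval_mul, Polynomial.eval_C, Finset.mul_sum]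
    rw [← Finset.sum_sub_distrib, ← Finset.sum_add_distrib]
    refine Finset.sum_congr rfl fun i hi => ?_
    simp only [Finset.mem_filter, Finset.mem_range] at hi
    obtain ⟨hik, m, rfl⟩ := hi
    have hk : (k : ℝ) = (k - (m + m) : ℕ) + 2 * ((m + m) / 2 : ℕ) := by
      norm_cast; omega
    rw [← gegenbauer_zonal, ← hk]
    simp only [Polynomial.eval_mul]
    ring
  · conv_rhs => rw [hc]
    simp only [map_sum, map_mul, map_pow, realEval_X, realEval_transverseSq, hx, Complex.re_sum,
      Polynomial.eval_finsetSum]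
    refine Finset.sum_congr rfl fun i _ => ?_
    have hC : realEval x (C (c i)) = c i := by simp [realEval]
    rw [hC]
    norm_cast
    rw [Complex.re_mul_ofReal]
    simp

lemma continuous_of_mem_sphereHarm {n k : ℕ}
    {f : Metric.sphere (0 : EuclideanSpace ℝ (Fin n)) 1 → ℂ} (hf : f ∈ sphereHarm n k) :
    Continuous f := by
  obtain ⟨F, -, rfl⟩ := hf
  exact (continuous_realEval F).comp continuous_subtype_val

lemma integrable_mul_conj_of_integral_ne_zero {X ι : Type*} [MeasurableSpace X]
    {μ : Measure X} {e : ι → X → ℂ} (hm : ∀ l, AEStronglyMeasurable (e l) μ)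
    (hne : ∀ l, ∫ p, e l p * conj (e l p) ∂μ ≠ 0) (l m : ι) :
    Integrable (fun p => e l p * conj (e m p)) μ := by
  have h2 (l : ι) : MemLp (e l) 2 μ := by
    rw [memLp_two_iff_integrable_sq_norm (hm l)]
    have h := (Integrable.of_integral_ne_zero (hne l)).norm
    simpa [pow_two] using h
  exact (h2 l).integrable_mul (h2 m).star

/-- If precomposition with a measure-preserving map `T` preserves the span of a finite orthonormal
family, then the reproducing kernel of the family is invariant under `T`. -/
lemma sum_mul_conj_comp {X ι : Type*} [MeasurableSpace X] [Fintype ι] [DecidableEq ι]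
    {μ : Measure X} {e : ι → X → ℂ} {T : X → X}
    (hT : ∀ g : X → ℂ, ∫ x, g (T x) ∂μ = ∫ x, g x ∂μ)
    (hm : ∀ l, AEStronglyMeasurable (e l) μ)
    (hON : ∀ l m, ∫ p, e l p * conj (e m p) ∂μ = if l = m then 1 else 0)
    (hspan : ∀ l, e l ∘ T ∈ Submodule.span ℂ (Set.range e)) (x y : X) :
    ∑ l, e l (T x) * conj (e l (T y)) = ∑ l, e l x * conj (e l y) := by
  simp_rw [Submodule.mem_span_range_iff_exists_fun] at hspan
  choose U hU using hspan
  have hU' (l : ι) (x : X) : e l (T x) = ∑ i, U l i * e i x := by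
    simpa [Finset.sum_apply] using (congr_fun (hU l) x).symm
  have hcomm (l m i j : ι) (x y : X) : U l i * e i x * (conj (U m j) * conj (e j y)) =
      U l i * conj (U m j) * (e i x * conj (e j y)) := mul_mul_mul_comm _ _ _ _
  have hint := integrable_mul_conj_of_integral_ne_zero hm fun l => by simp [hON]
  have hUU : (Matrix.of U) * (Matrix.of U).conjTranspose = 1 := by
    ext l m
    have h := (hT fun p => e l p * conj (e m p)).trans (hON l m)
    simp only [hU', map_sum, map_mul, Finset.sum_mul_sum] at h
    rw [integral_finsetSum] at h
    · simp_rw [Matrix.mul_apply, Matrix.one_apply, ← h, Matrix.conjTranspose_apply, Matrix.of_apply]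
      refine Finset.sum_congr rfl fun i _ => ?_
      rw [integral_finsetSum]
      · simp_rw [hcomm, integral_const_mul, hON]
        simp
      · intro j _
        simp_rw [hcomm]
        exact (hint i j).const_mul _
    · intro i _
      refine integrable_finsetSum _ fun j _ => ?_
      simp_rw [hcomm]
      exact (hint i j).const_mul _
  rw [mul_eq_one_comm] at hUU
  have hUU' (i j : ι) : ∑ l, U l i * conj (U l j) = if i = j then 1 else 0 := by
    have := congr_fun₂ hUU j i
    simp only [Matrix.mul_apply, Matrix.conjTranspose_apply, Matrix.of_apply, Matrix.one_apply,
      eq_comm (a := j)] at this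
    rw [← this]
    exact Finset.sum_congr rfl fun l _ => mul_comm _ _
  simp only [hU', map_sum, map_mul, Finset.sum_mul_sum]
  rw [Finset.sum_comm]
  refine Finset.sum_congr rfl fun i _ => ?_
  rw [Finset.sum_comm]
  simp_rw [hcomm, ← Finset.sum_mul, hUU']
  simp

/-- A rotation-invariant kernel on the sphere depends only on the inner product. -/
lemma eq_of_inner_eq {E β : Type*} [NormedAddCommGroup E] [InnerProductSpace ℝ E]
    {K : Metric.sphere (0 : E) 1 → Metric.sphere (0 : E) 1 → β}
    (hK : ∀ (g : E ≃ₗᵢ[ℝ] E) x y, K (sphereIsometry g x) (sphereIsometry g y) = K x y)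
    {x y x' y' : Metric.sphere (0 : E) 1} (h : ⟪(x : E), (y : E)⟫ = ⟪(x' : E), (y' : E)⟫) :
    K x y = K x' y' := by
  have swap (u v : Metric.sphere (0 : E) 1) :
      sphereIsometry (ℝ ∙ ((u : E) - v))ᗮ.reflection u = v :=
    Subtype.ext (Submodule.reflection_sub (by simp))
  set g := (ℝ ∙ ((y : E) - y'))ᗮ.reflection with hg
  have hgy : sphereIsometry g y = y' := swap y y'
  set z := sphereIsometry g x with hz
  have hzy : ⟪(z : E), (y' : E)⟫ = ⟪(x' : E), (y' : E)⟫ := by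
    rw [← h, ← hgy]
    exact g.inner_map_map _ _
  have hfix : sphereIsometry (ℝ ∙ ((z : E) - x'))ᗮ.reflection y' = y' := by
    refine Subtype.ext (Submodule.reflection_mem_subspace_eq_self ?_)
    rw [Submodule.mem_orthogonal_singleton_iff_inner_right, inner_sub_left, hzy, sub_self]
  rw [← hK g, hgy, ← hK (ℝ ∙ ((z : E) - x'))ᗮ.reflection, swap, hfix]

/-- A nonzero harmonic polynomial of degree `k`. -/
lemma X_add_I_mul_X_pow_mem {n : ℕ} {i₀ i₁ : Fin n} (hi : i₀ ≠ i₁) (k : ℕ) :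
    (X i₀ + C Complex.I * X i₁) ^ k ∈ harmSubmodule n k := by
  rw [mem_harmSubmodule]
  constructor
  · have : (X i₀ + C Complex.I * X i₁ : MvPolynomial (Fin n) ℂ).IsHomogeneous 1 :=
      (isHomogeneous_X ℂ i₀).add
        (by simpa using (isHomogeneous_C (Fin n) Complex.I).mul (isHomogeneous_X ℂ i₁))
    simpa using this.pow k
  · have hI : (C Complex.I * C Complex.I : MvPolynomial (Fin n) ℂ) = -1 := by
      rw [← map_mul, Complex.I_mul_I, map_neg, map_one]
    rw [polyLaplacian_apply, sum_eq_add_add_sum_erase_erase hi, Finset.sum_eq_zero, add_zero]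
    · simp [Derivation.leibniz_pow, Derivation.leibniz, pderiv_X_of_ne hi, pderiv_X_of_ne hi.symm]
      linear_combination (k * (k - 1 : ℕ) * (X i₀ + C Complex.I * X i₁) ^ (k - 1 - 1)) * hI
    · intro i h
      simp only [Finset.mem_erase] at h
      simp [Derivation.leibniz_pow, Derivation.leibniz, pderiv_X_of_ne h.1.symm,
        pderiv_X_of_ne h.2.1.symm]

/-- addition formula: if `e_1, …, e_{h_k}` is an orthonormal basis of
the space `H_k` of spherical harmonics of degree `k` (with respect to the surface
measure on `S^{n-1}`), then there is a constant `α_k > 0` such that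
`∑_l e_l(x) conj(e_l(y)) = α_k P_k^{(α,α)}(x·y)` with `α = (n-3)/2`, where
`P_k^{(α,α)}` is the normalized Jacobi polynomial of degree `k`: the polynomial
with `P(1) = 1`, of degree `k`, orthogonal to all polynomials of lower degree for
the weight `(1-t²)^α` on `[-1,1]`. -/
theorem addition_formula (n k : ℕ) (hn : 2 ≤ n)
    (h : ℕ) (e : Fin h → (Metric.sphere (0 : EuclideanSpace ℝ (Fin n)) 1 → ℂ))
    (he : ∀ l, e l ∈ sphereHarm n k)
    (hspan : Submodule.span ℂ (Set.range e) = sphereHarm n k)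
    (hON : ∀ l m : Fin h,
      ∫ p, e l p * conj (e m p) ∂(μH[(n : ℝ) - 1]) = if l = m then 1 else 0) :
    ∃ (P : Polynomial ℝ) (αk : ℝ),
      P.degree = (k : ℕ) ∧
      P.eval 1 = 1 ∧
      (∀ Q : Polynomial ℝ, Q.degree < (k : ℕ) →
        ∫ t in (-1 : ℝ)..1,
          P.eval t * Q.eval t * (1 - t ^ 2) ^ ((n - 3 : ℝ) / 2) = 0) ∧
      0 < αk ∧
      ∀ x y : Metric.sphere (0 : EuclideanSpace ℝ (Fin n)) 1,
        ∑ l : Fin h, e l x * conj (e l y) =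
          ((αk * P.eval ⟪(x : EuclideanSpace ℝ (Fin n)),
              (y : EuclideanSpace ℝ (Fin n))⟫ : ℝ) : ℂ) := by
  classical
  let i₀ : Fin n := ⟨0, by omega⟩
  let i₁ : Fin n := ⟨1, by omega⟩
  have hi : i₀ ≠ i₁ := by simp [i₀, i₁]
  let K (x y : Metric.sphere (0 : EuclideanSpace ℝ (Fin n)) 1) : ℂ := ∑ l, e l x * conj (e l y)
  have hK (g : EuclideanSpace ℝ (Fin n) ≃ₗᵢ[ℝ] EuclideanSpace ℝ (Fin n))
      (x y : Metric.sphere (0 : EuclideanSpace ℝ (Fin n)) 1) :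
      K (sphereIsometry g x) (sphereIsometry g y) = K x y := by
    refine sum_mul_conj_comp (μ := μH[(n : ℝ) - 1]) (fun f => ?_) (fun l => ?_) hON
      (fun l => hspan ▸ comp_sphereIsometry_mem g (he l)) x y
    · exact ((sphereIsometry g).measurePreserving_hausdorffMeasure _).integral_comp
        (sphereIsometry g).toHomeomorph.measurableEmbedding f
    · exact (continuous_of_mem_sphereHarm (he l)).aestronglyMeasurable
  let p : Metric.sphere (0 : EuclideanSpace ℝ (Fin n)) 1 := ⟨EuclideanSpace.single i₀ 1, by simp⟩
  have hinner (x : Metric.sphere (0 : EuclideanSpace ℝ (Fin n)) 1) :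
      ⟪(x : EuclideanSpace ℝ (Fin n)), (p : EuclideanSpace ℝ (Fin n))⟫ = x.1 i₀ := by
    simp [p, EuclideanSpace.inner_single_right]
  have hsq (x : Metric.sphere (0 : EuclideanSpace ℝ (Fin n)) 1) : ∑ i, x.1 i ^ 2 = 1 := by
    rw [← EuclideanSpace.real_norm_sq_eq, norm_eq_of_mem_sphere, one_pow]
  let ofVec (v : Fin n → ℝ) (hv : ∑ i, v i ^ 2 = 1) :
      Metric.sphere (0 : EuclideanSpace ℝ (Fin n)) 1 :=
    ⟨WithLp.toLp 2 v, by simp [EuclideanSpace.norm_eq, hv]⟩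
  obtain ⟨F, hF, hFK⟩ : (fun x => K x p) ∈ sphereHarm n k := by
    have : (fun x => K x p) = ∑ l, conj (e l p) • e l := by
      ext x
      simp [K, Finset.sum_apply, mul_comm]
    rw [this]
    exact Submodule.sum_mem _ fun l _ => Submodule.smul_mem _ _ (he l)
  have hFK' (x : Metric.sphere (0 : EuclideanSpace ℝ (Fin n)) 1) : realEval x.1 F = K x p :=
    congr_fun hFK x
  have hz : IsZonal i₀ F := by
    intro x y hx hy hxy
    refine (hFK' (ofVec x hx)).trans (Eq.trans ?_ (hFK' (ofVec y hy)).symm)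
    exact eq_of_inner_eq hK (by rw [hinner, hinner]; exact hxy)
  obtain ⟨P, hP, hPF⟩ := hz.exists_isGegenbauer hi hF
  have hKP (x y : Metric.sphere (0 : EuclideanSpace ℝ (Fin n)) 1) :
      K x y = (P.eval ⟪(x : EuclideanSpace ℝ (Fin n)), (y : EuclideanSpace ℝ (Fin n))⟫ : ℝ) := by
    have hreal : conj (K x y) = K x y := by
      refine Eq.trans ?_ (eq_of_inner_eq hK (real_inner_comm _ _) : K y x = K x y)
      simp [K, mul_comm]
    obtain ⟨z, hzp⟩ : ∃ z : Metric.sphere (0 : EuclideanSpace ℝ (Fin n)) 1,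
        ⟪(z : EuclideanSpace ℝ (Fin n)), (p : EuclideanSpace ℝ (Fin n))⟫ =
          ⟪(x : EuclideanSpace ℝ (Fin n)), (y : EuclideanSpace ℝ (Fin n))⟫ := by
      let g := (ℝ ∙ ((y : EuclideanSpace ℝ (Fin n)) - p))ᗮ.reflection
      refine ⟨sphereIsometry g x, ?_⟩
      have hgy : g y = (p : EuclideanSpace ℝ (Fin n)) := Submodule.reflection_sub (by simp)
      rw [← hgy]
      exact g.inner_map_map _ _
    rw [← Complex.conj_eq_iff_re.mp hreal, eq_of_inner_eq hK hzp.symm, ← hFK', ← hzp, hinner,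
      hPF _ (hsq z)]
  have hpos : 0 < P.eval 1 := by
    have h1 : K p p = (P.eval 1 : ℝ) := by
      rw [hKP, real_inner_self_eq_norm_sq, norm_eq_of_mem_sphere, one_pow]
    have h2 : P.eval 1 = ∑ l, Complex.normSq (e l p) := by
      simp only [K, Complex.mul_conj] at h1
      exact_mod_cast h1.symm
    rw [h2]
    refine (Finset.sum_nonneg fun l _ => Complex.normSq_nonneg _).lt_of_ne' fun h0 => ?_
    rw [Finset.sum_eq_zero_iff_of_nonneg fun l _ => Complex.normSq_nonneg _] at h0
    have hf : restrictSphere n ((X i₀ + C Complex.I * X i₁) ^ k) ∈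
        Submodule.span ℂ (Set.range e) :=
      hspan ▸ Submodule.mem_map_of_mem (X_add_I_mul_X_pow_mem hi k)
    obtain ⟨c, hc⟩ := (Submodule.mem_span_range_iff_exists_fun ℂ).mp hf
    have hc' := congr_fun hc p
    have hX : restrictSphere n ((X i₀ + C Complex.I * X i₁) ^ k) p = 1 := by
      simp [restrictSphere_apply, realEval, p, hi.symm]
    rw [hX, Finset.sum_apply, Finset.sum_eq_zero] at hc'
    · exact zero_ne_one hc'
    · intro l hl
      simp [Complex.normSq_eq_zero.mp (h0 l hl)]
  have hP0 : P ≠ 0 := by rintro rfl; simp at hpos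
  refine ⟨.C (P.eval 1)⁻¹ * P, P.eval 1, ?_, ?_, fun Q hQ => ?_, hpos, fun x y => ?_⟩
  · rw [Polynomial.degree_C_mul (inv_ne_zero hpos.ne'), hP.degree_eq hn hP0]
  · simp [hpos.ne']
  · simp only [Polynomial.eval_mul, Polynomial.eval_C, mul_assoc]
    rw [intervalIntegral.integral_const_mul]
    simp only [← mul_assoc]
    rw [hP.integral_eq_zero hn Q hQ, mul_zero]
  · rw [Polynomial.eval_mul, Polynomial.eval_C, mul_inv_cancel_left₀ hpos.ne']
    exact hKP x y
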